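/- arXiv:2101.10426 — 2 statements merged into one kernel-verified Lean document; each statement's English description precedes it below -/
import Mathlib

section
/- Let d ≥ 2 and let H : [0,T) → H_d be a C¹ path of d×d complex Hermitian matrices such that for every t ∈ [0,T) the matrix H(t) has d distinct eigenvalues. Let U₀ be a unitary d×d matrix such that U₀* H(0) U₀ is diagonal. Then there exists a C¹ path U : [0,T) → d×d complex matrices with U(0) = U₀ such that for every t ∈ [0,T): (i) U(t) is unitary, (ii) U has derivative U'(t) = U(t) · u̇(U(t)* H(t) U(t), U(t)* H'(t) U(t)), and (iii) U(t)* H(t) U(t) is diagonal (its diagonal entries being the eigenvalues of H(t)). -/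
/-!
The path `U` solves a *linear* equation `U' = K U` whose coefficient `K` is built from `H` and
`H'` alone, so that global existence on `[0, T)` is automatic and neither eigenvalues nor
eigenprojections have to be followed in time.

If `Λ = U* H U` is diagonal, then `K = U u̇(Λ, U* H' U) U*` should satisfy
`H' = [K, H] + (something commuting with H)` and have no part commuting with `H`. As `H t` has
simple spectrum, its commutant is spanned by `1, H, …, H^(d-1)`, so this says that `(K, c)` solves
the square linear system
`[K, H] + ∑ₖ cₖ Hᵏ = H'`,  `Tr (Hᵏ K) = 0` for `k < d`  (`genMap`).
After diagonalising `H`, this system decouples into the equations `(vⱼ - vᵢ) Kᵢⱼ = H'ᵢⱼ` off the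
diagonal and two Vandermonde systems, hence it is invertible (`injective_genMap`); since inversion
of operators is continuous, `K` and `c` depend continuously on `t`
(`exists_continuousOn_solution`).

Let `U` solve `U' = K U`, `U 0 = U₀` (`exists_linear_ode`, by the Dyson series).
* Uniqueness in the linear system gives `K* = -K` (`isSkew_of_genMap`), so `U* U` is constant and
  `U` is unitary.
* `G = U* H U` satisfies `G' = U* (H' - [K, H]) U = ∑ₖ cₖ Gᵏ`. Hence `E = [G, G 0]` satisfies a
  linear equation: `[Gᵏ, G 0] = ∑ₐ Gᵃ E G^(k-1-a)`. As `E 0 = 0`, Grönwall gives `E = 0`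
  (`commute_of_deriv_eq_pow`). A matrix commuting with the diagonal matrix `G 0`, whose entries are
  distinct, is diagonal.
* With `G` diagonal, the linear system transported by `U` identifies `U* K U` with
  `u̇(G, U* H' U)` (`eq_udot_of_genMap_diagonal`), which is the required form of `U'`.
-/

open Matrix

/-- `u̇(Lam, A)`: the matrix with entries `-A i j / (Lam i i - Lam j j)` off the
diagonal and `0` on the diagonal. -/
noncomputable def udot {d : ℕ} (Lam A : Matrix (Fin d) (Fin d) ℂ) :
    Matrix (Fin d) (Fin d) ℂ :=
  Matrix.of fun i j => if i = j then 0 else -A i j / (Lam i i - Lam j j)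

/-! ### Global solutions of linear differential equations -/

section LinearODE

variable {A : Type*} [NormedRing A] [NormedAlgebra ℝ A]

/-- The `n`-th term of the Dyson series of `U' = K U`, `U 0 = U₀`. -/
noncomputable def dyson (K : ℝ → A) (U₀ : A) : ℕ → ℝ → A
  | 0 => fun _ => U₀
  | n + 1 => fun t => ∫ s in (0 : ℝ)..t, K s * dyson K U₀ n s

lemma continuous_dyson {K : ℝ → A} (hK : Continuous K) (U₀ : A) (n : ℕ) :
    Continuous (dyson K U₀ n) := by
  induction n with
  | zero => exact continuous_const
  | succ n ih =>
    exact intervalIntegral.continuous_primitive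
      (fun a b => (hK.mul ih).intervalIntegrable a b) 0

lemma norm_dyson_le {K : ℝ → A} (hK : Continuous K) (U₀ : A) {C : ℝ} (hC : ∀ t, ‖K t‖ ≤ C)
    (n : ℕ) (t : ℝ) : ‖dyson K U₀ n t‖ ≤ ‖U₀‖ * ((C * |t|) ^ n / n.factorial) := by
  have hC0 : 0 ≤ C := (norm_nonneg _).trans (hC 0)
  induction n generalizing t with
  | zero => simp [dyson]
  | succ n ih =>
    calc ‖dyson K U₀ (n + 1) t‖
        ≤ ∫ s in Set.uIoc 0 t, ‖K s * dyson K U₀ n s‖ :=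
          intervalIntegral.norm_integral_le_integral_norm_uIoc
      _ ≤ ∫ s in Set.uIoc 0 t, ‖U₀‖ * C ^ (n + 1) / n.factorial * |s - 0| ^ n := by
          refine MeasureTheory.setIntegral_mono_on ?_ ?_ measurableSet_uIoc ?_
          · exact (intervalIntegrable_iff.mp
              ((hK.mul (continuous_dyson hK U₀ n)).norm.intervalIntegrable 0 t))
          · exact (intervalIntegrable_iff.mp
              (Continuous.intervalIntegrable (by fun_prop) 0 t))
          · intro s _
            calc ‖K s * dyson K U₀ n s‖ ≤ ‖K s‖ * ‖dyson K U₀ n s‖ := norm_mul_le _ _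
              _ ≤ C * (‖U₀‖ * ((C * |s|) ^ n / n.factorial)) :=
                mul_le_mul (hC s) (ih s) (norm_nonneg _) hC0
              _ = _ := by rw [sub_zero]; ring
      _ = ‖U₀‖ * C ^ (n + 1) / n.factorial * (|t - 0| ^ (n + 1) / (n + 1)) := by
          rw [MeasureTheory.integral_const_mul, integral_pow_abs_sub_uIoc]
      _ = _ := by
          rw [sub_zero, Nat.factorial_succ]; push_cast; rw [mul_pow]; field_simp

variable [CompleteSpace A]

lemma hasDerivAt_dyson_succ {K : ℝ → A} (hK : Continuous K) (U₀ : A) (n : ℕ) (t : ℝ) :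
    HasDerivAt (dyson K U₀ (n + 1)) (K t * dyson K U₀ n t) t :=
  (hK.mul (continuous_dyson hK U₀ n)).integral_hasStrictDerivAt 0 t |>.hasDerivAt

/-- A linear ODE with bounded continuous coefficient on the whole line has a global solution,
namely the sum of its Dyson series. -/
lemma exists_linear_ode_bounded {K : ℝ → A} (hK : Continuous K) (U₀ : A) {C : ℝ}
    (hC : ∀ t, ‖K t‖ ≤ C) :
    ∃ U : ℝ → A, U 0 = U₀ ∧ ∀ t, HasDerivAt U (K t * U t) t := by
  have hC0 : 0 ≤ C := (norm_nonneg _).trans (hC 0)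
  have hsum : ∀ t, Summable fun n => dyson K U₀ n t := fun t =>
    .of_norm_bounded ((Real.summable_pow_div_factorial (C * |t|)).mul_left ‖U₀‖)
      fun n => norm_dyson_le hK U₀ hC n t
  have hzero : ∀ n, dyson K U₀ (n + 1) 0 = 0 := fun n => by simp [dyson]
  refine ⟨fun t => ∑' n, dyson K U₀ n t, ?_, fun t => ?_⟩
  · change ∑' n, dyson K U₀ n 0 = U₀
    rw [(hsum 0).tsum_eq_zero_add]
    simp [dyson]
  · have heq : (fun t => ∑' n, dyson K U₀ n t) =
        fun t => U₀ + ∑' n, dyson K U₀ (n + 1) t := by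
      funext s
      rw [(hsum s).tsum_eq_zero_add]
      rfl
    change HasDerivAt (fun t => ∑' n, dyson K U₀ n t) (K t * ∑' n, dyson K U₀ n t) t
    rw [heq]
    have hd := hasDerivAt_tsum_of_isPreconnected (𝕜 := ℝ)
      (g := fun n t => dyson K U₀ (n + 1) t) (g' := fun n t => K t * dyson K U₀ n t)
      (u := fun n => C * (‖U₀‖ * ((C * (|t| + 1)) ^ n / n.factorial)))
      (t := Set.Ioo (-(|t| + 1)) (|t| + 1)) (y₀ := 0) (y := t)
      (((Real.summable_pow_div_factorial (C * (|t| + 1))).mul_left ‖U₀‖).mul_left C)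
      isOpen_Ioo isPreconnected_Ioo
      (fun n s _ => hasDerivAt_dyson_succ hK U₀ n s)
      (fun n s hs => ?_) ⟨by linarith [abs_nonneg t], by positivity⟩
      (by simp [hzero, summable_zero])
      ⟨by linarith [neg_abs_le t], by linarith [le_abs_self t]⟩
    · rw [(hsum t).tsum_mul_left] at hd
      exact hd.const_add U₀
    · have hs' : |s| ≤ |t| + 1 := (abs_lt.mpr hs).le
      calc ‖K s * dyson K U₀ n s‖ ≤ ‖K s‖ * ‖dyson K U₀ n s‖ := norm_mul_le _ _
        _ ≤ C * (‖U₀‖ * ((C * |s|) ^ n / n.factorial)) :=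
          mul_le_mul (hC s) (norm_dyson_le hK U₀ hC n s) (norm_nonneg _) hC0
        _ ≤ _ := by gcongr

/-- A continuous linear ODE on `[0, T)` has a solution on all of `[0, T)`. -/
lemma exists_linear_ode {T : ℝ} {K : ℝ → A} (hK : ContinuousOn K (Set.Ico 0 T)) (U₀ : A) :
    ∃ U : ℝ → A, U 0 = U₀ ∧
      ∀ t ∈ Set.Ico 0 T, HasDerivWithinAt U (K t * U t) (Set.Ico 0 T) t := by
  -- For `b` in `[0, T)`, `V b` solves the equation on `[0, b]`; it is obtained by extending `K` from
  -- `[0, b]` to the line by its boundary values. For other `b` it is junk.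
  have key : ∀ b : ℝ, ∃ V : ℝ → A, V 0 = U₀ ∧
      (b ∈ Set.Ico 0 T → ∀ t ∈ Set.Icc 0 b, HasDerivAt V (K t * V t) t) := by
    intro b
    by_cases hb : b ∈ Set.Ico 0 T
    · have hsub : Set.Icc 0 b ⊆ Set.Ico 0 T := fun s hs => ⟨hs.1, hs.2.trans_lt hb.2⟩
      have hKb := hK.mono hsub
      obtain ⟨C, hC⟩ := isCompact_Icc.exists_bound_of_continuousOn hKb
      obtain ⟨V, hV0, hV⟩ := exists_linear_ode_bounded (K := Set.IccExtend hb.1 (Set.domRestrict _ K))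
        (hKb.domRestrict.Icc_extend') U₀ (C := C) (fun t => hC _ (Subtype.coe_prop _))
      refine ⟨V, hV0, fun _ t ht => ?_⟩
      have := hV t
      rwa [Set.IccExtend_of_mem _ _ ht] at this
    · exact ⟨fun _ => U₀, rfl, fun h => absurd h hb⟩
  choose V hV0 hV using key
  -- By uniqueness the `V b` agree where they overlap, so they glue to `t ↦ V t t`.
  have hagree : ∀ b ∈ Set.Ico 0 T, ∀ t ∈ Set.Icc 0 b, V b t = V t t := by
    intro b hb t ht
    have htT : t ∈ Set.Ico 0 T := ⟨ht.1, ht.2.trans_lt hb.2⟩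
    have hd : ∀ s ∈ Set.Icc 0 t, HasDerivAt (V b - V t) (K s * (V b - V t) s) s := by
      intro s hs
      have := (hV b hb s ⟨hs.1, hs.2.trans ht.2⟩).sub (hV t htT s hs)
      rwa [← mul_sub] at this
    obtain ⟨C, hC⟩ := isCompact_Icc.exists_bound_of_continuousOn
      (hK.mono (fun s (hs : s ∈ Set.Icc 0 t) => ⟨hs.1, hs.2.trans_lt htT.2⟩))
    have := eq_zero_of_abs_deriv_le_mul_abs_self_of_eq_zero_right (K := C)
      (fun s hs => (hd s hs).continuousAt.continuousWithinAt)
      (fun s hs => (hd s (Set.Ico_subset_Icc_self hs)).hasDerivWithinAt)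
      (by simp [hV0])
      (fun s hs => (norm_mul_le _ _).trans (by
        gcongr; exact hC s (Set.Ico_subset_Icc_self hs))) t ⟨ht.1, le_rfl⟩
    exact sub_eq_zero.mp this
  refine ⟨fun t => V t t, hV0 0, fun t ht => ?_⟩
  have hb : (t + T) / 2 ∈ Set.Ico 0 T := ⟨by linarith [ht.1, ht.2], by linarith [ht.2]⟩
  have htb : t < (t + T) / 2 := by linarith [ht.2]
  have := (hV _ hb t ⟨ht.1, htb.le⟩).hasDerivWithinAt (s := Set.Ico 0 T)
  rw [hagree _ hb t ⟨ht.1, htb.le⟩] at this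
  refine this.congr_of_eventuallyEq ?_ (hagree _ hb t ⟨ht.1, htb.le⟩).symm
  filter_upwards [self_mem_nhdsWithin, mem_nhdsWithin_of_mem_nhds (Iio_mem_nhds htb)] with s hs hs'
  exact (hagree _ hb s ⟨hs.1, le_of_lt hs'⟩).symm

end LinearODE

section Generator

variable {d : ℕ}

/-- The linear map `(X, c) ↦ ([X, H] + ∑ₖ cₖ Hᵏ, (Tr (Hᵏ X))ₖ)`, with `k` ranging over
`0, …, d - 1`. Solving it for `(H', 0)` splits `H'` into a commutator with `H` and a part commuting
with `H`, and normalises the generator `X` of the commutator. -/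
noncomputable def genMap (H : Matrix (Fin d) (Fin d) ℂ) :
    (Matrix (Fin d) (Fin d) ℂ × (Fin d → ℂ)) →ₗ[ℂ] (Matrix (Fin d) (Fin d) ℂ × (Fin d → ℂ)) where
  toFun p := (p.1 * H - H * p.1 + ∑ k, p.2 k • H ^ (k : ℕ), fun k : Fin d => trace (H ^ (k : ℕ) * p.1))
  map_add' p q := by
    refine Prod.ext ?_ ?_
    · simp only [Prod.fst_add, Prod.snd_add, Pi.add_apply, add_smul, Finset.sum_add_distrib,
        add_mul, mul_add]
      abel
    · funext k
      simp [mul_add]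
  map_smul' a p := by
    refine Prod.ext ?_ ?_
    · simp [Finset.smul_sum, smul_add, smul_sub, mul_smul]
    · funext k
      simp

lemma genMap_apply (H X : Matrix (Fin d) (Fin d) ℂ) (c : Fin d → ℂ) :
    genMap H (X, c) =
      (X * H - H * X + ∑ k, c k • H ^ (k : ℕ), fun k : Fin d => trace (H ^ (k : ℕ) * X)) := rfl

lemma genMap_diagonal_apply_fst (v : Fin d → ℂ) (X : Matrix (Fin d) (Fin d) ℂ) (c : Fin d → ℂ)
    (i j : Fin d) : (genMap (diagonal v) (X, c)).1 i j =
      X i j * (v j - v i) + if i = j then ∑ k, c k * v i ^ (k : ℕ) else 0 := by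
  have : (∑ k, c k • (diagonal v) ^ (k : ℕ)) i j =
      if i = j then ∑ k, c k * v i ^ (k : ℕ) else 0 := by
    simp only [diagonal_pow, Matrix.sum_apply, Matrix.smul_apply, diagonal_apply, smul_eq_mul,
      Pi.pow_apply]
    split_ifs <;> simp
  change (X * diagonal v - diagonal v * X + ∑ k, c k • (diagonal v) ^ (k : ℕ)) i j = _
  rw [Matrix.add_apply, this, Matrix.sub_apply, mul_diagonal, diagonal_mul]
  ring

lemma genMap_diagonal_apply_snd (v : Fin d → ℂ) (X : Matrix (Fin d) (Fin d) ℂ) (c : Fin d → ℂ)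
    (k : Fin d) : (genMap (diagonal v) (X, c)).2 k = ∑ i, X i i * v i ^ (k : ℕ) := by
  simp [genMap_apply, trace, diagonal_pow, diagonal_mul, mul_comm]

/-- For a diagonal matrix with distinct entries the system decouples: the off-diagonal entries of `X`
are determined one by one, and its diagonal and `c` by Vandermonde systems. -/
lemma eq_zero_of_genMap_diagonal {v : Fin d → ℂ} (hv : Function.Injective v)
    {X : Matrix (Fin d) (Fin d) ℂ} {c : Fin d → ℂ} (h : genMap (diagonal v) (X, c) = 0) :
    X = 0 ∧ c = 0 := by
  have h1 : ∀ i j, X i j * (v j - v i) + (if i = j then ∑ k, c k * v i ^ (k : ℕ) else 0) = 0 := by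
    intro i j
    rw [← genMap_diagonal_apply_fst, h]; rfl
  have h2 : ∀ k : Fin d, ∑ i, X i i * v i ^ (k : ℕ) = 0 := by
    intro k
    rw [← genMap_diagonal_apply_snd v X c, h]; rfl
  constructor
  · have hdiag := eq_zero_of_forall_pow_sum_mul_pow_eq_zero hv h2
    ext i j
    by_cases hij : i = j
    · subst hij; exact congrFun hdiag i
    · have := h1 i j
      rw [if_neg hij, add_zero, mul_eq_zero, sub_eq_zero] at this
      exact this.resolve_right fun h => hij (hv h).symm
  · refine eq_zero_of_forall_index_sum_mul_pow_eq_zero hv fun i => ?_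
    simpa using h1 i i

/-- The system is equivariant under simultaneous unitary conjugation of `H` and `X`, with `c`
unchanged. -/
lemma genMap_conj (V : unitary (Matrix (Fin d) (Fin d) ℂ)) (H X : Matrix (Fin d) (Fin d) ℂ)
    (c : Fin d → ℂ) :
    genMap (Unitary.conjStarAlgAut ℂ _ V H) (Unitary.conjStarAlgAut ℂ _ V X, c) =
      (Unitary.conjStarAlgAut ℂ _ V (genMap H (X, c)).1, (genMap H (X, c)).2) := by
  refine Prod.ext ?_ ?_
  · simp only [genMap_apply, map_add, map_sub, map_mul, map_sum, map_smul, map_pow]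
  · funext k
    simp only [genMap_apply, ← map_pow, ← map_mul]
    rw [Unitary.conjStarAlgAut_apply, trace_mul_cycle]
    simp

/-- If `H` has `d` distinct eigenvalues, the entries of any unitarily equivalent diagonal matrix
are distinct and are exactly the eigenvalues. -/
lemma injective_of_ncard_spectrum {v : Fin d → ℂ} {H : Matrix (Fin d) (Fin d) ℂ}
    {V : unitary (Matrix (Fin d) (Fin d) ℂ)} (hV : Unitary.conjStarAlgAut ℂ _ V H = diagonal v)
    (hH : (spectrum ℂ H).ncard = d) : Function.Injective v ∧ Set.range v = spectrum ℂ H := by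
  have hs : Set.range v = spectrum ℂ H := by
    rw [← spectrum_diagonal, ← hV, AlgEquiv.spectrum_eq]
  refine ⟨?_, hs⟩
  rw [← hs] at hH
  rw [← Set.injOn_univ]
  refine Set.injOn_of_ncard_image_eq ?_
  rw [Set.image_univ, hH, Set.ncard_univ, Nat.card_fin]

lemma injective_genMap {H : Matrix (Fin d) (Fin d) ℂ} (hH : H.IsHermitian)
    (hdist : (spectrum ℂ H).ncard = d) : Function.Injective (genMap H) := by
  rw [← LinearMap.ker_eq_bot, LinearMap.ker_eq_bot']
  rintro ⟨X, c⟩ h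
  have hs : Unitary.conjStarAlgAut ℂ _ (star hH.eigenvectorUnitary) H =
      diagonal (RCLike.ofReal ∘ hH.eigenvalues) := hH.conjStarAlgAut_star_eigenvectorUnitary
  have hc := genMap_conj (star hH.eigenvectorUnitary) H X c
  rw [h, hs] at hc
  obtain ⟨hX, rfl⟩ := eq_zero_of_genMap_diagonal (injective_of_ncard_spectrum hs hdist).1
    (hc.trans (by simp))
  have : X = 0 := (EmbeddingLike.map_eq_zero_iff (f := Unitary.conjStarAlgAut ℂ _ _)).mp hX
  rw [this]; rfl

/-- For Hermitian `H` and `B`, the system is preserved by `(X, c) ↦ (-X*, c̄)`, so its unique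
solution is skew-Hermitian. -/
lemma isSkew_of_genMap {H B X : Matrix (Fin d) (Fin d) ℂ} {c : Fin d → ℂ} (hH : H.IsHermitian)
    (hB : B.IsHermitian) (hinj : Function.Injective (genMap H)) (h : genMap H (X, c) = (B, 0)) :
    Xᴴ = -X := by
  have h1 : X * H - H * X + ∑ k, c k • H ^ (k : ℕ) = B := congrArg Prod.fst h
  have h2 : ∀ k : Fin d, trace (H ^ (k : ℕ) * X) = 0 := fun k => congrFun (congrArg Prod.snd h) k
  have h' : genMap H (-Xᴴ, star c) = (B, 0) := by
    refine Prod.ext ?_ ?_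
    · have := congrArg conjTranspose h1
      simp only [conjTranspose_add, conjTranspose_sub, conjTranspose_mul, conjTranspose_sum,
        conjTranspose_smul, conjTranspose_pow, hH.eq, hB.eq] at this
      simp only [genMap_apply, Pi.star_apply]
      rw [← this]
      noncomm_ring
    · funext k
      have := congrArg star (h2 k)
      rw [← trace_conjTranspose, conjTranspose_mul, conjTranspose_pow, hH.eq, trace_mul_comm] at this
      simp [genMap_apply, this]
  have := congrArg Prod.fst (hinj (h'.trans h.symm))
  exact neg_eq_iff_eq_neg.mp this

/-- In a diagonalising basis, the generator is the matrix `u̇`. -/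
lemma eq_udot_of_genMap_diagonal {v : Fin d → ℂ} (hv : Function.Injective v)
    {B X : Matrix (Fin d) (Fin d) ℂ} {c : Fin d → ℂ} (h : genMap (diagonal v) (X, c) = (B, 0)) :
    X = udot (diagonal v) B := by
  have h1 : ∀ i j, X i j * (v j - v i) +
      (if i = j then ∑ k, c k * v i ^ (k : ℕ) else 0) = B i j := by
    intro i j
    rw [← genMap_diagonal_apply_fst, h]
  have h2 : ∀ k : Fin d, ∑ i, X i i * v i ^ (k : ℕ) = 0 := by
    intro k
    rw [← genMap_diagonal_apply_snd v X c, h]; rfl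
  have hdiag := eq_zero_of_forall_pow_sum_mul_pow_eq_zero hv h2
  ext i j
  by_cases hij : i = j
  · subst hij
    simpa [udot] using congrFun hdiag i
  · have hne : v i - v j ≠ 0 := sub_ne_zero.mpr fun h => hij (hv h)
    rw [udot, of_apply, if_neg hij, diagonal_apply_eq, diagonal_apply_eq, ← h1 i j, if_neg hij]
    field_simp
    ring

/-- The commutator with a power of `G` is linear in the commutator with `G`. -/
lemma pow_commutator {A : Type*} [Ring A] (G R : A) (k : ℕ) :
    G ^ k * R - R * G ^ k =
      ∑ a ∈ Finset.range k, G ^ a * (G * R - R * G) * G ^ (k - 1 - a) := by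
  induction k with
  | zero => simp
  | succ k ih =>
    have : G ^ (k + 1) * R - R * G ^ (k + 1) =
        G * (G ^ k * R - R * G ^ k) + (G * R - R * G) * G ^ k := by
      rw [pow_succ']; noncomm_ring
    rw [this, ih, Finset.sum_range_succ', Finset.mul_sum]
    congr 1
    · refine Finset.sum_congr rfl fun a _ => ?_
      rw [pow_succ', show k + 1 - 1 - (a + 1) = k - 1 - a by omega]
      simp only [mul_assoc]
    · simp

lemma isDiag_of_commute {v : Fin d → ℂ} (hv : Function.Injective v)
    {G : Matrix (Fin d) (Fin d) ℂ} (h : G * diagonal v - diagonal v * G = 0) : G.IsDiag := by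
  intro i j hij
  have := congrFun (congrFun h i) j
  rw [Matrix.sub_apply, mul_diagonal, diagonal_mul, Matrix.zero_apply, mul_comm, ← sub_mul,
    mul_eq_zero, sub_eq_zero] at this
  exact this.resolve_left fun h => hij (hv h).symm

end Generator

/-! ### Continuous dependence and uniqueness -/

section Solve

/-- The solution of a continuously varying, injective, finite-dimensional square linear system
varies continuously. -/
lemma exists_continuousOn_solution {E : Type*} [NormedAddCommGroup E] [NormedSpace ℂ E]
    [FiniteDimensional ℂ E] {s : Set ℝ} {Φ : ℝ → E →ₗ[ℂ] E} {y : ℝ → E}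
    (hΦ : ∀ x, ContinuousOn (fun t => Φ t x) s) (hy : ContinuousOn y s)
    (hinj : ∀ t ∈ s, Function.Injective (Φ t)) :
    ∃ z : ℝ → E, ContinuousOn z s ∧ ∀ t ∈ s, Φ t (z t) = y t := by
  have : CompleteSpace E := FiniteDimensional.complete ℂ E
  let L : ℝ → E →L[ℂ] E := fun t => LinearMap.toContinuousLinearMap (Φ t)
  have hL : ContinuousOn L s := continuousOn_clm_apply.mpr hΦ
  have hunit : ∀ t ∈ s, IsUnit (L t) := fun t ht =>
    ContinuousLinearMap.isUnit_iff_bijective.mpr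
      ⟨hinj t ht, LinearMap.injective_iff_surjective.mp (hinj t ht)⟩
  refine ⟨fun t => Ring.inverse (L t) (y t), ?_, fun t ht => ?_⟩
  · refine ContinuousOn.clm_apply (fun t ht => ?_) hy
    obtain ⟨u, hu⟩ := hunit t ht
    have := NormedRing.inverse_continuousAt u
    rw [hu] at this
    exact this.comp_continuousWithinAt (hL t ht)
  · change (L t * Ring.inverse (L t)) (y t) = y t
    rw [Ring.mul_inverse_cancel _ (hunit t ht)]
    rfl

/-- Grönwall on `[0, T)`, with a growth rate that is only locally bounded. -/
lemma eq_zero_of_norm_deriv_le {E : Type*} [NormedAddCommGroup E] [NormedSpace ℝ E] {T : ℝ}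
    {f f' : ℝ → E} {b : ℝ → ℝ}
    (hf : ∀ t ∈ Set.Ico 0 T, HasDerivWithinAt f (f' t) (Set.Ico 0 T) t)
    (hb : ContinuousOn b (Set.Ico 0 T)) (hf' : ∀ t ∈ Set.Ico 0 T, ‖f' t‖ ≤ b t * ‖f t‖)
    (h0 : f 0 = 0) : ∀ t ∈ Set.Ico 0 T, f t = 0 := by
  intro t ht
  have hsub : ∀ s ∈ Set.Icc 0 t, s ∈ Set.Ico 0 T := fun s hs => ⟨hs.1, hs.2.trans_lt ht.2⟩
  obtain ⟨C, hC⟩ := isCompact_Icc.exists_bound_of_continuousOn (hb.mono hsub)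
  refine eq_zero_of_abs_deriv_le_mul_abs_self_of_eq_zero_right (K := C) (f' := f')
    (fun s hs => ((hf s (hsub s hs)).continuousWithinAt.mono hsub)) (fun s hs => ?_) h0
    (fun s hs => ?_) t ⟨ht.1, le_rfl⟩
  · have hs' := hsub s (Set.Ico_subset_Icc_self hs)
    refine (hf s hs').mono_of_mem_nhdsWithin ?_
    filter_upwards [self_mem_nhdsWithin, mem_nhdsWithin_of_mem_nhds (Iio_mem_nhds hs'.2)]
      with r hr hr'
    exact ⟨hs.1.trans hr, hr'⟩
  · have hs' := Set.Ico_subset_Icc_self hs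
    refine (hf' s (hsub s hs')).trans ?_
    gcongr
    exact (le_abs_self _).trans (hC s hs')

end Solve

/-! ### The diagonalising path -/

section Frame

open scoped Matrix.Norms.Operator

variable {d : ℕ}

/-- Continuity of the adjoint for the topology of the operator norm, which instance search does not
identify with the entrywise topology. -/
local instance : @ContinuousStar (Matrix (Fin d) (Fin d) ℂ)
    (PseudoMetricSpace.toUniformSpace.toTopologicalSpace) _ :=
  ⟨continuous_id.matrix_conjTranspose⟩

lemma isHermitian_deriv {T t : ℝ} {H : ℝ → Matrix (Fin d) (Fin d) ℂ}
    {B : Matrix (Fin d) (Fin d) ℂ} (ht : t ∈ Set.Ico 0 T)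
    (hH : HasDerivWithinAt H B (Set.Ico 0 T) t)
    (hHerm : ∀ t ∈ Set.Ico (0 : ℝ) T, (H t).IsHermitian) : B.IsHermitian := by
  have hstar := hH.star.congr (f₁ := H) (fun s hs => (hHerm s hs).symm) (hHerm t ht).symm
  exact (uniqueDiffOn_Ico 0 T t ht).eq_deriv _ hstar hH

lemma star_mul_self_of_ode {T : ℝ} {K U : ℝ → Matrix (Fin d) (Fin d) ℂ}
    (hU : ∀ t ∈ Set.Ico 0 T, HasDerivWithinAt U (K t * U t) (Set.Ico 0 T) t)
    (hK : ∀ t ∈ Set.Ico 0 T, star (K t) = -K t) (h0 : star (U 0) * U 0 = 1) :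
    ∀ t ∈ Set.Ico 0 T, star (U t) * U t = 1 := by
  intro t ht
  refine sub_eq_zero.mp (eq_zero_of_norm_deriv_le (T := T) (f := fun t => star (U t) * U t - 1)
    (f' := fun _ => 0) (b := fun _ => 0) (fun t ht => ?_) continuousOn_const (by simp)
    (by simp [h0]) t ht)
  have := ((hU t ht).star.mul (hU t ht)).sub_const 1
  have hzero : star (K t * U t) * U t + star (U t) * (K t * U t) = 0 := by
    rw [star_mul, hK t ht]
    noncomm_ring
  exact hzero ▸ this

/-- If `G'` is a polynomial in `G` with continuous coefficients, then `G t` commutes with `G 0`. -/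
lemma commute_of_deriv_eq_pow {T : ℝ} {G : ℝ → Matrix (Fin d) (Fin d) ℂ} {c : ℝ → Fin d → ℂ}
    (hG : ∀ t ∈ Set.Ico 0 T,
      HasDerivWithinAt G (∑ k, c t k • G t ^ (k : ℕ)) (Set.Ico 0 T) t)
    (hc : ContinuousOn c (Set.Ico 0 T)) :
    ∀ t ∈ Set.Ico 0 T, G t * G 0 - G 0 * G t = 0 := by
  have hGc : ContinuousOn G (Set.Ico 0 T) := fun t ht => (hG t ht).continuousWithinAt
  refine eq_zero_of_norm_deriv_le
    (b := fun t => ∑ k : Fin d, ‖c t k‖ *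
      ∑ a ∈ Finset.range (k : ℕ), ‖G t ^ a‖ * ‖G t ^ ((k : ℕ) - 1 - a)‖)
    (fun t ht => ((hG t ht).mul_const (G 0)).sub ((hG t ht).const_mul (G 0))) ?_ ?_ (sub_self _)
  · have hck : ∀ k, ContinuousOn (fun t => c t k) (Set.Ico 0 T) := continuousOn_pi.mp hc
    refine continuousOn_finsetSum _ fun k _ => (hck k).norm.mul
      (continuousOn_finsetSum _ fun a _ => (hGc.pow _).norm.mul (hGc.pow _).norm)
  · intro t _
    have : (∑ k, c t k • G t ^ (k : ℕ)) * G 0 - G 0 * ∑ k, c t k • G t ^ (k : ℕ) =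
        ∑ k : Fin d, c t k • ∑ a ∈ Finset.range (k : ℕ),
          G t ^ a * (G t * G 0 - G 0 * G t) * G t ^ ((k : ℕ) - 1 - a) := by
      simp only [← pow_commutator, Finset.sum_mul, Finset.mul_sum, smul_sub,
        Finset.sum_sub_distrib, smul_mul_assoc, mul_smul_comm]
    rw [this, Finset.sum_mul]
    refine norm_sum_le_of_le _ fun k _ => ?_
    rw [norm_smul, mul_assoc, Finset.sum_mul]
    refine mul_le_mul_of_nonneg_left (norm_sum_le_of_le _ fun a _ => ?_) (norm_nonneg _)
    calc _ ≤ ‖G t ^ a‖ * ‖G t * G 0 - G 0 * G t‖ * ‖G t ^ ((k : ℕ) - 1 - a)‖ :=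
          (norm_mul_le _ _).trans (by gcongr; exact norm_mul_le _ _)
      _ = _ := by ring

/-- The theorem with derivatives taken in the normed space of matrices instead of entrywise. -/
lemma exists_frame {T : ℝ} (hT : 0 < T)
    {H H' : ℝ → Matrix (Fin d) (Fin d) ℂ}
    (hderiv : ∀ t ∈ Set.Ico (0 : ℝ) T, HasDerivWithinAt H (H' t) (Set.Ico (0 : ℝ) T) t)
    (hcont : ContinuousOn H' (Set.Ico (0 : ℝ) T))
    (hHerm : ∀ t ∈ Set.Ico (0 : ℝ) T, (H t).IsHermitian)
    (hdist : ∀ t ∈ Set.Ico (0 : ℝ) T, (spectrum ℂ (H t)).ncard = d)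
    {U₀ : Matrix (Fin d) (Fin d) ℂ} (hU₀ : U₀ ∈ Matrix.unitaryGroup (Fin d) ℂ)
    (hU₀diag : (U₀ᴴ * H 0 * U₀).IsDiag) :
    ∃ U U' : ℝ → Matrix (Fin d) (Fin d) ℂ,
      U 0 = U₀ ∧
      (∀ t ∈ Set.Ico (0 : ℝ) T, HasDerivWithinAt U (U' t) (Set.Ico (0 : ℝ) T) t) ∧
      ContinuousOn U' (Set.Ico (0 : ℝ) T) ∧
      ∀ t ∈ Set.Ico (0 : ℝ) T,
        U t ∈ Matrix.unitaryGroup (Fin d) ℂ ∧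
        U' t = U t * udot ((U t)ᴴ * H t * U t) ((U t)ᴴ * H' t * U t) ∧
        ((U t)ᴴ * H t * U t).IsDiag ∧
        ∀ i : Fin d, ((U t)ᴴ * H t * U t) i i ∈ spectrum ℂ (H t) := by
  have h0T : (0 : ℝ) ∈ Set.Ico 0 T := ⟨le_rfl, hT⟩
  have hHc : ContinuousOn H (Set.Ico 0 T) := fun t ht => (hderiv t ht).continuousWithinAt
  have hinj : ∀ t ∈ Set.Ico 0 T, Function.Injective (genMap (H t)) := fun t ht =>
    injective_genMap (hHerm t ht) (hdist t ht)
  obtain ⟨z, hzc, hz⟩ := exists_continuousOn_solution (Φ := fun t => genMap (H t))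
    (y := fun t => (H' t, (0 : Fin d → ℂ)))
    (fun x => by
      refine ContinuousOn.prodMk ?_ (continuousOn_pi.mpr fun k => ?_)
      · exact ((continuousOn_const.mul hHc).sub (hHc.mul continuousOn_const)).add
          (continuousOn_finsetSum _ fun k _ => (hHc.pow (k : ℕ)).const_smul (x.2 k))
      · exact (continuous_id.matrix_trace).comp_continuousOn ((hHc.pow _).mul continuousOn_const))
    (hcont.prodMk continuousOn_const) hinj
  set K : ℝ → Matrix (Fin d) (Fin d) ℂ := fun t => (z t).1 with hK
  set c : ℝ → Fin d → ℂ := fun t => (z t).2 with hc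
  have hKc : ContinuousOn K (Set.Ico 0 T) := continuous_fst.comp_continuousOn hzc
  have hcc : ContinuousOn c (Set.Ico 0 T) := continuous_snd.comp_continuousOn hzc
  have hgen : ∀ t ∈ Set.Ico 0 T, genMap (H t) (K t, c t) = (H' t, 0) := hz
  have hskew : ∀ t ∈ Set.Ico 0 T, star (K t) = -K t := fun t ht =>
    isSkew_of_genMap (hHerm t ht) (isHermitian_deriv ht (hderiv t ht) hHerm) (hinj t ht) (hgen t ht)
  obtain ⟨U, hU0, hU⟩ := exists_linear_ode hKc U₀
  have hunit : ∀ t ∈ Set.Ico 0 T, star (U t) * U t = 1 :=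
    star_mul_self_of_ode hU hskew (by rw [hU0]; exact hU₀.1)
  have hunit' : ∀ t ∈ Set.Ico 0 T, U t * star (U t) = 1 := fun t ht =>
    mul_eq_one_comm.mp (hunit t ht)
  have hmem : ∀ t ∈ Set.Ico 0 T, U t ∈ Matrix.unitaryGroup (Fin d) ℂ := fun t ht =>
    ⟨hunit t ht, hunit' t ht⟩
  -- The automorphism `X ↦ U* X U`, used to move sums, powers and spectra through the conjugation.
  let φ : ∀ t ∈ Set.Ico 0 T, Matrix (Fin d) (Fin d) ℂ ≃⋆ₐ[ℂ] Matrix (Fin d) (Fin d) ℂ :=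
    fun t ht => Unitary.conjStarAlgAut ℂ _ (star ⟨U t, hmem t ht⟩)
  have hφ : ∀ t (ht : t ∈ Set.Ico 0 T) (X : Matrix (Fin d) (Fin d) ℂ),
      φ t ht X = star (U t) * X * U t := fun t ht X => Unitary.conjStarAlgAut_star_apply _ X
  have hG : ∀ t ∈ Set.Ico 0 T, HasDerivWithinAt (fun t => star (U t) * H t * U t)
      (∑ k, c t k • (star (U t) * H t * U t) ^ (k : ℕ)) (Set.Ico 0 T) t := by
    intro t ht
    have h1 := ((hU t ht).star.mul (hderiv t ht)).mul (hU t ht)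
    have h2 : K t * H t - H t * K t + ∑ k, c t k • H t ^ (k : ℕ) = H' t :=
      congrArg Prod.fst (hgen t ht)
    have h3 : ∑ k, c t k • (star (U t) * H t * U t) ^ (k : ℕ) =
        star (U t) * (∑ k, c t k • H t ^ (k : ℕ)) * U t := by
      simp only [← hφ t ht, map_sum, map_smul, map_pow]
    have h4 : (star (K t * U t) * H t + star (U t) * H' t) * U t +
        (star (U t) * H t) * (K t * U t) =
        star (U t) * (∑ k, c t k • H t ^ (k : ℕ)) * U t := by
      rw [star_mul, hskew t ht, ← h2]
      noncomm_ring
    rw [h3, ← h4]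
    exact h1
  -- `hG` says that `G = U* H U` satisfies `G' = ∑ₖ cₖ Gᵏ`.
  have hcomm := commute_of_deriv_eq_pow hG hcc
  have hdiag0 : star (U 0) * H 0 * U 0 = diagonal fun i => (U₀ᴴ * H 0 * U₀) i i := by
    rw [hU0]; exact hU₀diag.diagonal_diag.symm
  have hinj0 := (injective_of_ncard_spectrum ((hφ 0 h0T (H 0)).trans hdiag0) (hdist 0 h0T)).1
  have hdiag : ∀ t ∈ Set.Ico 0 T, (star (U t) * H t * U t).IsDiag := by
    intro t ht
    refine isDiag_of_commute hinj0 ?_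
    rw [← hdiag0]
    exact hcomm t ht
  refine ⟨U, fun t => K t * U t, hU0, hU, hKc.mul fun t ht => (hU t ht).continuousWithinAt,
    fun t ht => ?_⟩
  have hd := (hφ t ht (H t)).trans (hdiag t ht).diagonal_diag.symm
  obtain ⟨hv, hrange⟩ := injective_of_ncard_spectrum hd (hdist t ht)
  refine ⟨hmem t ht, ?_, hdiag t ht, fun i => ?_⟩
  · have hconj := genMap_conj (star ⟨U t, hmem t ht⟩) (H t) (K t) (c t)
    rw [hgen t ht] at hconj
    have hud := eq_udot_of_genMap_diagonal hv ((congrArg (fun M => genMap M (φ t ht (K t), c t))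
      hd).symm.trans hconj)
    change φ t ht (K t) = udot _ (φ t ht (H' t)) at hud
    rw [← hd, hφ t ht, hφ t ht, hφ t ht] at hud
    change K t * U t = U t * udot (star (U t) * H t * U t) (star (U t) * H' t * U t)
    rw [← hud, ← mul_assoc, ← mul_assoc, hunit' t ht, one_mul]
  · rw [← hrange]
    exact ⟨i, rfl⟩

end Frame

theorem stmt_0 {d : ℕ} (hd : 2 ≤ d) (T : ℝ) (hT : 0 < T)
    (H H' : ℝ → Matrix (Fin d) (Fin d) ℂ)
    -- `H` is `C¹` on `[0, T)`, with derivative `H'` there: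
    (hderiv : ∀ t ∈ Set.Ico (0 : ℝ) T, ∀ i j : Fin d,
      HasDerivWithinAt (fun s => H s i j) (H' t i j) (Set.Ico (0 : ℝ) T) t)
    (hcont : ContinuousOn H' (Set.Ico (0 : ℝ) T))
    -- `H t` is Hermitian with `d` distinct eigenvalues:
    (hHerm : ∀ t ∈ Set.Ico (0 : ℝ) T, (H t).IsHermitian)
    (hdist : ∀ t ∈ Set.Ico (0 : ℝ) T, (spectrum ℂ (H t)).ncard = d)
    -- `U₀` is unitary and diagonalises `H 0`:
    (U₀ : Matrix (Fin d) (Fin d) ℂ) (hU₀ : U₀ ∈ Matrix.unitaryGroup (Fin d) ℂ)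
    (hU₀diag : (U₀ᴴ * H 0 * U₀).IsDiag) :
    ∃ U U' : ℝ → Matrix (Fin d) (Fin d) ℂ,
      U 0 = U₀ ∧
      -- `U` is `C¹` on `[0, T)`, with derivative `U'` there:
      (∀ t ∈ Set.Ico (0 : ℝ) T, ∀ i j : Fin d,
        HasDerivWithinAt (fun s => U s i j) (U' t i j) (Set.Ico (0 : ℝ) T) t) ∧
      ContinuousOn U' (Set.Ico (0 : ℝ) T) ∧
      ∀ t ∈ Set.Ico (0 : ℝ) T,
        -- (i) `U t` is unitary,
        U t ∈ Matrix.unitaryGroup (Fin d) ℂ ∧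
        -- (ii) the derivative satisfies `U' = U · u̇(U* H U, U* H' U)`,
        U' t = U t * udot ((U t)ᴴ * H t * U t) ((U t)ᴴ * H' t * U t) ∧
        -- (iii) `U* H U` is diagonal, its diagonal entries being eigenvalues of `H t`:
        ((U t)ᴴ * H t * U t).IsDiag ∧
        ∀ i : Fin d, ((U t)ᴴ * H t * U t) i i ∈ spectrum ℂ (H t) := by
  obtain ⟨U, U', h0, hU, hU'c, h⟩ := exists_frame hT
    (fun t ht => hasDerivWithinAt_pi.mpr fun i => hasDerivWithinAt_pi.mpr fun j => hderiv t ht i j)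
    hcont hHerm hdist hU₀ hU₀diag
  exact ⟨U, U', h0, fun t ht i j =>
    hasDerivWithinAt_pi.mp (hasDerivWithinAt_pi.mp (hU t ht) i) j, hU'c, h⟩
end

section
/- For every d ≥ 2, the set of d×d complex Hermitian matrices having a repeated eigenvalue is a null set with respect to the Lebesgue (Haar) measure on the finite-dimensional real vector space of d×d Hermitian matrices. -/
/-!
The Hermitian matrices with a repeated eigenvalue form the zero set of the discriminant of the
characteristic polynomial, which is a polynomial `P` in the matrix entries
(`charpolyResultant`, `eval_charpolyResultant_eq_zero_iff`); in particular this set is closed.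
By disintegration of Haar measure it suffices that every real line `A + t D` in one fixed
direction `D` meets it in a null set. Take `D = diag(0, 1, …, d - 1)`, whose spectrum is simple.
Then `s ↦ P (D + s A)` is a polynomial in `s` that is nonzero at `s = 0`, so it has finitely many
zeros. For `t ≠ 0`, `A + t D = t (D + t⁻¹ A)` has a repeated eigenvalue if and only if
`D + t⁻¹ A` does, so only finitely many `t` are bad.
-/

open Matrix MeasureTheory

/-- The resultant of the universal characteristic polynomial and its derivative, as a polynomial in
the entries of a `d × d` matrix. The formal degrees `d` and `d - 1` are fixed so that it commutes
with specialization. -/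
noncomputable def charpolyResultant (d : ℕ) : MvPolynomial (Fin d × Fin d) ℂ :=
  Polynomial.resultant (charpoly.univ ℂ (Fin d))
    (Polynomial.derivative (charpoly.univ ℂ (Fin d))) d (d - 1)

lemma eval_charpolyResultant {d : ℕ} (A : Matrix (Fin d) (Fin d) ℂ) :
    MvPolynomial.eval (fun ij : Fin d × Fin d => A ij.1 ij.2) (charpolyResultant d) =
      Polynomial.resultant A.charpoly (Polynomial.derivative A.charpoly) := by
  have h := charpoly.univ_map_eval₂Hom (Fin d) (RingHom.id ℂ)
    (fun ij : Fin d × Fin d => A ij.1 ij.2)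
  have hA : (Matrix.of (Function.curry fun ij : Fin d × Fin d => A ij.1 ij.2)) = A := rfl
  rw [hA] at h
  have hd : (Polynomial.derivative A.charpoly).natDegree = d - 1 := by
    rw [Polynomial.natDegree_derivative, charpoly_natDegree_eq_dim, Fintype.card_fin]
  rw [hd, charpoly_natDegree_eq_dim, Fintype.card_fin]
  unfold charpolyResultant
  change MvPolynomial.eval₂Hom (RingHom.id ℂ) _ _ = _
  rw [← Polynomial.resultant_map_map, ← Polynomial.derivative_map, h]

lemma spectrum_ncard_lt_iff {d : ℕ} (A : Matrix (Fin d) (Fin d) ℂ) :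
    (spectrum ℂ A).ncard < d ↔ ¬ A.charpoly.Separable := by
  have h0 : A.charpoly ≠ 0 := (charpoly_monic A).ne_zero
  have hs : spectrum ℂ A = A.charpoly.rootSet ℂ := by
    ext x
    rw [mem_spectrum_iff_isRoot_charpoly, Polynomial.mem_rootSet]
    simp [h0, Polynomial.IsRoot]
  have hle : (A.charpoly.rootSet ℂ).ncard ≤ d := by
    have := Polynomial.ncard_rootSet_le A.charpoly ℂ
    rwa [charpoly_natDegree_eq_dim, Fintype.card_fin] at this
  have hiff := Polynomial.card_rootSet_eq_natDegree_iff_of_splits (K := ℂ) h0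
    (IsAlgClosed.splits _)
  rw [charpoly_natDegree_eq_dim, Fintype.card_fin, ← Nat.card_eq_fintype_card,
    Nat.card_coe_set_eq] at hiff
  rw [hs, ← hiff]
  omega

lemma eval_charpolyResultant_eq_zero_iff {d : ℕ} (A : Matrix (Fin d) (Fin d) ℂ) :
    MvPolynomial.eval (fun ij : Fin d × Fin d => A ij.1 ij.2) (charpolyResultant d) = 0 ↔
      (spectrum ℂ A).ncard < d := by
  rw [eval_charpolyResultant, Polynomial.resultant_eq_zero_iff, spectrum_ncard_lt_iff,
    Polynomial.Separable]
  exact and_iff_right (Or.inl (charpoly_monic A).ne_zero)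

lemma ncard_spectrum_smul {d : ℕ} (A : Matrix (Fin d) (Fin d) ℂ) {c : ℂ} (hc : c ≠ 0) :
    (spectrum ℂ (c • A)).ncard = (spectrum ℂ A).ncard := by
  have h := spectrum.unit_smul_eq_smul A (Units.mk0 c hc)
  change spectrum ℂ (c • A) = (fun x => c * x) '' spectrum ℂ A at h
  rw [h]
  exact Set.ncard_image_of_injective _ (mul_right_injective₀ hc)

lemma ncard_spectrum_diagonal (d : ℕ) :
    (spectrum ℂ (diagonal (fun i : Fin d => ((i : ℕ) : ℂ)))).ncard = d := by
  rw [spectrum_diagonal]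
  have hi : Function.Injective (fun i : Fin d => ((i : ℕ) : ℂ)) := fun i j h =>
    Fin.ext (Nat.cast_injective h)
  rw [← Set.image_univ, Set.ncard_image_of_injective _ hi]
  simp

/-- A pencil `D + s A` through a matrix `D` with simple spectrum leaves the simple-spectrum locus
for only finitely many `s`. -/
lemma finite_pencil {d : ℕ} (D A : Matrix (Fin d) (Fin d) ℂ)
    (hD : (spectrum ℂ D).ncard = d) :
    {s : ℂ | (spectrum ℂ (D + s • A)).ncard < d}.Finite := by
  let q : Polynomial ℂ := MvPolynomial.aeval (fun ij : Fin d × Fin d =>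
    Polynomial.C (D ij.1 ij.2) + Polynomial.X * Polynomial.C (A ij.1 ij.2)) (charpolyResultant d)
  have hq (s : ℂ) : q.eval s = MvPolynomial.eval
      (fun ij : Fin d × Fin d => (D + s • A) ij.1 ij.2) (charpolyResultant d) := by
    change Polynomial.evalRingHom s q = _
    simp only [q, MvPolynomial.aeval_def, MvPolynomial.hom_eval₂]
    rw [← MvPolynomial.eval₂_id]
    congr 1
    · ext x <;> simp
    · ext ij; simp [mul_comm s]
  have hq0 : q ≠ 0 := by
    intro h
    have h1 := hq 0
    rw [h, Polynomial.eval_zero, eq_comm, eval_charpolyResultant_eq_zero_iff] at h1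
    simp [hD] at h1
  refine (Polynomial.finite_setOfPred_isRoot hq0).subset fun s hs => ?_
  change q.eval s = 0
  rw [hq]
  exact (eval_charpolyResultant_eq_zero_iff _).2 hs

lemma finite_line {d : ℕ} (D A : Matrix (Fin d) (Fin d) ℂ)
    (hD : (spectrum ℂ D).ncard = d) :
    {t : ℝ | (spectrum ℂ (A + (t : ℂ) • D)).ncard < d}.Finite := by
  have hf : ({0} ∪ (fun t : ℝ => (t : ℂ)⁻¹) ⁻¹'
      {s : ℂ | (spectrum ℂ (D + s • A)).ncard < d}).Finite := by
    refine (Set.finite_singleton _).union ((finite_pencil D A hD).preimage ?_)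
    exact (inv_injective.comp Complex.ofReal_injective).injOn
  refine hf.subset fun t ht => ?_
  by_cases h0 : t = 0
  · exact Or.inl h0
  · right
    have hc : (t : ℂ) ≠ 0 := Complex.ofReal_ne_zero.2 h0
    have h : A + (t : ℂ) • D = (t : ℂ) • (D + (t : ℂ)⁻¹ • A) := by
      rw [smul_add, smul_smul, mul_inv_cancel₀ hc, one_smul, add_comm]
    rw [Set.mem_ofPred_eq, h, ncard_spectrum_smul _ hc] at ht
    exact ht

/-- A closed set meeting every line of one fixed direction in a finite set is Haar-null. -/
lemma measure_eq_zero_of_finite_lines {E : Type*} [NormedAddCommGroup E] [NormedSpace ℝ E]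
    [FiniteDimensional ℝ E] [MeasurableSpace E] [BorelSpace E] (μ : Measure E)
    [μ.IsAddHaarMeasure] {s : Set E} (hs : IsClosed s) (D : E)
    (h : ∀ A : E, {t : ℝ | A + t • D ∈ s}.Finite) : μ s = 0 := by
  have : ProperSpace E := FiniteDimensional.proper ℝ E
  have key := ae_mem_of_ae_add_linearMap_mem (LinearMap.toSpanSingleton ℝ E D)
    (volume : Measure ℝ) μ hs.measurableSet.compl fun A => by
      rw [ae_iff]
      refine ((h A).subset fun t ht => ?_).measure_zero _
      simpa using ht
  rw [ae_iff] at key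
  simpa using key

theorem stmt_13 (d : ℕ) (hd : 2 ≤ d)
    [MeasurableSpace (selfAdjoint (Matrix (Fin d) (Fin d) ℂ))]
    [BorelSpace (selfAdjoint (Matrix (Fin d) (Fin d) ℂ))]
    (μ : Measure (selfAdjoint (Matrix (Fin d) (Fin d) ℂ)))
    [μ.IsAddHaarMeasure] :
    μ {A : selfAdjoint (Matrix (Fin d) (Fin d) ℂ) |
        (spectrum ℂ (A : Matrix (Fin d) (Fin d) ℂ)).ncard < d} = 0 := by
  let D : selfAdjoint (Matrix (Fin d) (Fin d) ℂ) :=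
    ⟨diagonal (fun i : Fin d => ((i : ℕ) : ℂ)), by
      rw [selfAdjoint.mem_iff, star_eq_conjTranspose, diagonal_conjTranspose]
      congr 1; ext i; simp⟩
  have hclosed : IsClosed {A : selfAdjoint (Matrix (Fin d) (Fin d) ℂ) |
      (spectrum ℂ (A : Matrix (Fin d) (Fin d) ℂ)).ncard < d} := by
    simp_rw [← eval_charpolyResultant_eq_zero_iff]
    refine isClosed_eq ((MvPolynomial.continuous_eval _).comp ?_) continuous_const
    exact continuous_pi fun ij => continuous_subtype_val.matrix_elem ij.1 ij.2
  have hfin : FiniteDimensional ℝ (selfAdjoint (Matrix (Fin d) (Fin d) ℂ)) :=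
    inferInstanceAs (FiniteDimensional ℝ (selfAdjoint.submodule ℝ (Matrix (Fin d) (Fin d) ℂ)))
  -- The sup norm induces the product topology on matrices only up to unfolding, so the instances
  -- are passed explicitly.
  let N : NormedAddCommGroup (Matrix (Fin d) (Fin d) ℂ) := Matrix.normedAddCommGroup
  let NS : NormedSpace ℝ (Matrix (Fin d) (Fin d) ℂ) := Matrix.normedSpace
  let N' : NormedAddCommGroup (selfAdjoint (Matrix (Fin d) (Fin d) ℂ)) :=
    AddSubgroup.normedAddCommGroup
  let NS' : NormedSpace ℝ (selfAdjoint (Matrix (Fin d) (Fin d) ℂ)) :=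
    { norm_smul_le := fun c A => norm_smul_le c (A : Matrix (Fin d) (Fin d) ℂ) }
  refine @measure_eq_zero_of_finite_lines _ N' NS' hfin _ ‹_› μ ‹_› _ hclosed D fun A => ?_
  refine (finite_line (D : Matrix (Fin d) (Fin d) ℂ) A
    (ncard_spectrum_diagonal d)).subset fun t ht => ?_
  exact ht
end
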